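/- arXiv:1311.7229 — 7 statements merged into one kernel-verified Lean document; each statement's English description precedes it below -/
import Mathlib

section
/- Let G be a finite connected acyclic simple graph (a tree) and let t be a natural number. If every pair of vertices u, u' of G satisfies dist_G(u,u') ≤ 2t, then there exists a vertex v of G such that dist_G(v,u) ≤ t holds for every vertex u. -/
/-!
The centre is a vertex `v` of least eccentricity `e = max_u dist v u`. Suppose `e > t`, take `u`
with `dist v u = e`, and let `w` be the neighbour of `v` on a shortest path to `u`. As `w` has
eccentricity at least `e`, some `u'` satisfies `dist w u' ≥ e`. In a tree the distances from `u'`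
to the adjacent vertices `v` and `w` differ by exactly one, and `dist v u' ≤ e`, so
`dist w u' = dist v u' + 1`. Hence `vw` is an edge with `u` strictly nearer to `w` and `u'`
strictly nearer to `v`; it is a bridge, so it separates `u'` from `u`
(`dist_add_dist_le_of_adj`), and
`dist u' u = dist u' v + dist v u ≥ (e - 1) + e > 2 * t`, contradicting the diameter bound.
-/

theorem dist_add_dist_le_length_of_mem_support {V : Type*} {G : SimpleGraph V} {a b x : V}
    (p : G.Walk a b) (hx : x ∈ p.support) : G.dist a x + G.dist x b ≤ p.length := by
  classical
  have h := congrArg SimpleGraph.Walk.length (p.take_spec hx)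
  rw [SimpleGraph.Walk.length_append] at h
  have h1 := SimpleGraph.dist_le (p.takeUntil x hx)
  have h2 := SimpleGraph.dist_le (p.dropUntil x hx)
  omega

/-- If `u'` is on the `v`-side and `u` on the `w`-side of an edge `vw` of a tree, then a shortest
path from `u'` to `u` passes through `v`. -/
theorem dist_add_dist_le_of_adj {V : Type*} {G : SimpleGraph V} (hconn : G.Connected)
    (hacyc : G.IsAcyclic) {v w u u' : V} (hvw : G.Adj v w)
    (hu : G.dist w u < G.dist v u) (hu' : G.dist v u' < G.dist w u') :
    G.dist u' v + G.dist v u ≤ G.dist u' u := by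
  obtain ⟨a, ha⟩ := hconn.exists_walk_length_eq_dist v u'
  obtain ⟨r, hr⟩ := hconn.exists_walk_length_eq_dist u' u
  obtain ⟨b, hb⟩ := hconn.exists_walk_length_eq_dist w u
  -- The walk `v → u' → u → w` must use the bridge `vw`, and only its middle part `r` can do so.
  have hbridge : G.IsBridge s(v, w) :=
    SimpleGraph.isAcyclic_iff_forall_isBridge.mp hacyc hvw
  have hmem := SimpleGraph.isBridge_iff_forall_walk_mem_edges.mp hbridge
    ((a.append r).append b.reverse)
  simp only [SimpleGraph.Walk.edges_append, SimpleGraph.Walk.edges_reverse, List.mem_append,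
    List.mem_reverse] at hmem
  rcases hmem with (h | h) | h
  · have := dist_add_dist_le_length_of_mem_support a (a.snd_mem_support_of_mem_edges h)
    omega
  · rw [← hr]
    exact dist_add_dist_le_length_of_mem_support r (r.fst_mem_support_of_mem_edges h)
  · have := dist_add_dist_le_length_of_mem_support b (b.fst_mem_support_of_mem_edges h)
    omega

/-- If `G` is a finite connected acyclic simple graph (a tree) and every pair
of vertices is at distance at most `2*t`, then there is a vertex within distance `t` of
every vertex. -/
theorem tree_has_center {V : Type*} [Fintype V] (G : SimpleGraph V) (t : ℕ)
    (hconn : G.Connected) (hacyc : G.IsAcyclic)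
    (hdiam : ∀ u u' : V, G.dist u u' ≤ 2 * t) :
    ∃ v : V, ∀ u : V, G.dist v u ≤ t := by
  have : Nonempty V := hconn.nonempty
  choose far hfar using fun x : V => Finite.exists_max (G.dist x)
  obtain ⟨v, hv⟩ := Finite.exists_min fun x : V => G.dist x (far x)
  refine ⟨v, fun x => (hfar v x).trans ?_⟩
  by_contra! hlt
  obtain ⟨u, hu⟩ : ∃ u, u = far v := ⟨_, rfl⟩
  rw [← hu] at hlt
  obtain ⟨p, hp⟩ := hconn.exists_walk_length_eq_dist v u
  -- The neighbour of `v` is the second vertex of a shortest path to `u`, which is not empty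
  -- because `t < dist v u`.
  cases p with
  | nil => simp at hlt
  | @cons _ w _ hvw q =>
    rw [SimpleGraph.Walk.length_cons] at hp
    have hq := SimpleGraph.dist_le q
    have hmin := hv w
    have hle := hfar v (far w)
    rw [← hu] at hmin hle
    have hstep := SimpleGraph.IsTree.dist_eq_dist_add_one_of_adj ⟨hconn, hacyc⟩ (far w) hvw
    rw [SimpleGraph.dist_comm (u := far w) (v := v),
      SimpleGraph.dist_comm (u := far w) (v := w)] at hstep
    have hsep := dist_add_dist_le_of_adj hconn hacyc hvw (u := u) (u' := far w)
      (by omega) (by omega)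
    have hd := hdiam (far w) u
    rw [SimpleGraph.dist_comm (u := far w) (v := v)] at hsep
    omega
end

section
/- Let G be a finite connected simple graph and let t ≥ 1 be a natural number. Suppose that for every vertex v and all vertices u, u' with dist_G(v,u) ≤ t+1 and dist_G(v,u') ≤ t+1 one has dist_G(u,u') ≤ 2t. Then dist_G(u,u') ≤ 2t holds for ALL pairs of vertices u, u' of G, i.e., the diameter of G is at most 2t. -/
/-!
Being at distance at most `2 * t` from a fixed vertex `u'` propagates along edges: if `u` is adjacent
to `x` and `dist x u' ≤ 2 * t`, then the vertex at position `t` on a geodesic from `x` to `u'`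
(`u'` itself if the geodesic is shorter than `t`, by the convention of `getVert`) is within
`t` of both `x` and `u'`, so its `(t+1)`-ball contains `u` and `u'`, and the local hypothesis applies.
Connectedness then carries the bound from `u'` itself to every vertex.
-/

/-- If `G` is a finite connected simple graph, `t ≥ 1`, and for every vertex `v`
all pairs of vertices within distance `t+1` of `v` are at distance at most `2*t` from each
other, then all pairs of vertices of `G` are at distance at most `2*t`. -/
theorem local_test_implies_small_diameter {V : Type*} [Fintype V] (G : SimpleGraph V)
    (t : ℕ) (ht : 1 ≤ t) (hconn : G.Connected)
    (hlocal : ∀ v u u' : V, G.dist v u ≤ t + 1 → G.dist v u' ≤ t + 1 → G.dist u u' ≤ 2 * t) :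
    ∀ u u' : V, G.dist u u' ≤ 2 * t := by
  intro u u'
  obtain ⟨p⟩ := hconn u u'
  induction p with
  | nil => simp
  | @cons u x u' h p ih =>
    obtain ⟨q, hq⟩ := hconn.exists_walk_length_eq_dist x u'
    have h₁ : G.dist x (q.getVert t) ≤ t :=
      (SimpleGraph.dist_le (q.take t)).trans (by simp [SimpleGraph.Walk.take_length])
    have h₂ : G.dist (q.getVert t) u' ≤ t :=
      (SimpleGraph.dist_le (q.drop t)).trans (by rw [SimpleGraph.Walk.drop_length]; omega)
    have h₃ : G.dist u x = 1 := SimpleGraph.dist_eq_one_iff_adj.mpr h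
    have h₄ : G.dist u (q.getVert t) ≤ G.dist u x + G.dist x (q.getVert t) :=
      hconn.dist_triangle
    refine hlocal (q.getVert t) u u' ?_ (by omega)
    rw [SimpleGraph.dist_comm]
    omega
end

section
/- Let G be a finite connected simple graph with vertex set V, let G' be a finite simple graph with vertex set V', and let λ : V → V' be a covering map. Let l be the common cardinality of the fibers of λ. Then there exists a partition of V into l sets A_1, …, A_l such that: (1) all A_j have the same cardinality |V'|; (2) for each j, the subgraph of G induced on A_j is connected; and (3) for each j, λ(A_j) = V', i.e., each A_j contains exactly one element of every fiber of λ. -/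
/-!
The domains are grown one fiber at a time. Over a set `S` of vertices of `G'`, consider `l` sections
of `f` whose values are distinct at each vertex of `S` and whose images of `S` each induce a connected
subgraph of `G`. Over a single vertex such sections are an enumeration of its fiber. If `S` is not all
of `V'`, some edge `i k` of `G'` leaves `S`, and each section is continued to `k` along the lift of
`i k` starting at its value over `i`. Two continuations never collide, because an edge of `G'`
has only one lift ending at a given vertex (`IsSectionFamily.exists_insert`). A maximal `S` is
therefore all of `V'`, and the images of the resulting global sections are the domains: by counting,
the `l` distinct values over each vertex exhaust its fiber.
-/

/-- A covering map between simple graphs: a surjective map on vertices that maps the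
neighbor set of each vertex bijectively onto the neighbor set of its image. -/
def IsGraphCovering {V V' : Type*} (G : SimpleGraph V) (G' : SimpleGraph V')
    (f : V → V') : Prop :=
  Function.Surjective f ∧ ∀ v : V, Set.BijOn f (G.neighborSet v) (G'.neighborSet (f v))

/-- A family of partial sections of `f` over `S`, with pairwise distinct values at every point of `S`,
such that the image of `S` under each of them induces a connected subgraph of `G`. The sections are
encoded as total maps, whose values outside `S` are irrelevant. -/
structure IsSectionFamily {V V' ι : Type*} (G : SimpleGraph V) (f : V → V') (S : Set V')
    (s : ι → V' → V) : Prop where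
  section_apply : ∀ j, ∀ i ∈ S, f (s j i) = i
  inj : ∀ i ∈ S, Function.Injective fun j => s j i
  conn : ∀ j, (G.induce (s j '' S)).Connected

lemma IsGraphCovering.exists_lift {V V' : Type*} {G : SimpleGraph V} {G' : SimpleGraph V'}
    {f : V → V'} (hcov : IsGraphCovering G G' f) {v : V} {k : V'} (h : G'.Adj (f v) k) :
    ∃ w, G.Adj v w ∧ f w = k :=
  (hcov.2 v).surjOn h

/-- Some edge of `G'` leaves any given nonempty proper subset `S`: the image of an edge on the boundary
of the preimage of `S` in the connected graph `G`. -/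
lemma IsGraphCovering.exists_boundary_adj {V V' : Type*} {G : SimpleGraph V} {G' : SimpleGraph V'}
    {f : V → V'} (hconn : G.Connected) (hcov : IsGraphCovering G G' f) {S : Set V'}
    (hne : S.Nonempty) (hS : S ≠ Set.univ) : ∃ i ∈ S, ∃ k ∉ S, G'.Adj i k := by
  obtain ⟨i, hi⟩ := hne
  obtain ⟨k, hk⟩ := (Set.ne_univ_iff_exists_notMem S).1 hS
  obtain ⟨v, rfl⟩ := hcov.1 i
  obtain ⟨w, rfl⟩ := hcov.1 k
  obtain ⟨p⟩ := hconn.preconnected v w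
  obtain ⟨d, -, h1, h2⟩ := p.exists_boundary_dart (f ⁻¹' S) hi hk
  exact ⟨f d.fst, h1, f d.snd, h2, (hcov.2 d.fst).mapsTo d.adj⟩

/-- A family of sections can be continued along an edge leaving its domain. -/
lemma IsSectionFamily.exists_insert {V V' ι : Type*} {G : SimpleGraph V} {G' : SimpleGraph V'}
    {f : V → V'} (hcov : IsGraphCovering G G' f) {S : Set V'} {s : ι → V' → V}
    (hs : IsSectionFamily G f S s) {i k : V'} (hi : i ∈ S) (hk : k ∉ S) (hik : G'.Adj i k) :
    ∃ t : ι → V' → V, IsSectionFamily G f (insert k S) t := by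
  classical
  have hlift : ∀ j, ∃ w, G.Adj (s j i) w ∧ f w = k := fun j =>
    hcov.exists_lift (by rwa [hs.section_apply j i hi])
  choose w hadj hw using hlift
  have hold : ∀ j, ∀ x ∈ S, Function.update (s j) k (w j) x = s j x := fun j x hx =>
    Function.update_of_ne (ne_of_mem_of_not_mem hx hk) _ _
  refine ⟨fun j => Function.update (s j) k (w j), ?_, ?_, ?_⟩
  · rintro j x (rfl | hx)
    · simpa using hw j
    · rw [hold j x hx]
      exact hs.section_apply j x hx
  · rintro x (rfl | hx) a b hab
    · simp only [Function.update_self] at hab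
      -- `s a i` and `s b i` are neighbors of the same vertex with the same image `i`.
      refine hs.inj i hi ((hcov.2 (w a)).injOn (hadj a).symm ?_ ?_)
      · rw [hab]
        exact (hadj b).symm
      · simp only [hs.section_apply _ i hi]
    · simp only [hold _ x hx] at hab
      exact hs.inj x hx hab
  · intro j
    have himg : Function.update (s j) k (w j) '' insert k S = s j '' S ∪ {w j} := by
      rw [Set.image_insert_eq, Function.update_self, Set.image_congr (hold j), Set.union_singleton]
    rw [himg]
    exact SimpleGraph.connected_induce_union (hs.conn j).preconnected
      SimpleGraph.Preconnected.of_subsingleton (Set.mem_image_of_mem _ hi) rfl (hadj j)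

/-- The sections exist globally: a maximal domain containing a base point is all of `V'`. -/
lemma IsGraphCovering.exists_isSectionFamily_univ {V V' : Type*} [Finite V] [Finite V']
    {G : SimpleGraph V} {G' : SimpleGraph V'} {f : V → V'} (hconn : G.Connected)
    (hcov : IsGraphCovering G G' f) {l : ℕ} (hl : ∀ i : V', Nat.card (f ⁻¹' {i}) = l) :
    ∃ s : Fin l → V' → V, IsSectionFamily G f Set.univ s := by
  obtain ⟨v⟩ := hconn.nonempty
  let e : Fin l ≃ f ⁻¹' {f v} := (Finite.equivFinOfCardEq (hl (f v))).symm
  have hbase : IsSectionFamily G f {f v} fun j _ => (e j : V) := by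
    refine ⟨?_, fun i _ => Subtype.val_injective.comp e.injective, fun j => ?_⟩
    · rintro j i rfl
      exact (e j).2
    · rw [Set.image_singleton]
      exact SimpleGraph.Connected.of_subsingleton
  obtain ⟨S, ⟨hSne, s, hs⟩, hmax⟩ :=
    (Set.toFinite {S : Set V' | S.Nonempty ∧ ∃ s : Fin l → V' → V,
      IsSectionFamily G f S s}).exists_maximal ⟨_, Set.singleton_nonempty _, _, hbase⟩
  by_cases hS : S = Set.univ
  · exact ⟨s, hS ▸ hs⟩
  · obtain ⟨i, hi, k, hk, hik⟩ := hcov.exists_boundary_adj hconn hSne hS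
    exact absurd (hmax ⟨Set.insert_nonempty _ _, hs.exists_insert hcov hi hk hik⟩
      (Set.subset_insert k S) (Set.mem_insert k S)) hk


/-- For a covering map `f` from a finite connected graph `G` onto a finite graph
`G'` all of whose fibers have cardinality `l`, the vertex set of `G` can be partitioned into
`l` pairwise disjoint sets, each of cardinality `|V'|`, each inducing a connected subgraph of
`G`, and each mapping onto all of `V'` under `f`. -/
theorem covering_fundamental_domains {V V' : Type*} [Fintype V] [Fintype V']
    (G : SimpleGraph V) (G' : SimpleGraph V') (f : V → V')
    (hconn : G.Connected) (hcov : IsGraphCovering G G' f)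
    (l : ℕ) (hl : ∀ i : V', Nat.card (f ⁻¹' {i}) = l) :
    ∃ A : Fin l → Set V,
      (⋃ j, A j) = Set.univ ∧
      (Pairwise fun j j' => Disjoint (A j) (A j')) ∧
      (∀ j, Nat.card (A j) = Nat.card V') ∧
      (∀ j, (G.induce (A j)).Connected) ∧
      (∀ j, f '' A j = Set.univ) := by
  obtain ⟨s, hs⟩ := hcov.exists_isSectionFamily_univ hconn hl
  have hf : ∀ j i, f (s j i) = i := fun j i => hs.section_apply j i trivial
  have hleft : ∀ j, Function.LeftInverse f (s j) := hf
  refine ⟨fun j => Set.range (s j), ?_, ?_, ?_, ?_, ?_⟩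
  · refine Set.eq_univ_of_forall fun v => Set.mem_iUnion.2 ?_
    -- `l` distinct values in a fiber of size `l` exhaust it.
    let g : Fin l → f ⁻¹' {f v} := fun j => ⟨s j (f v), hf j _⟩
    have hg : Function.Injective g := fun a b hab =>
      hs.inj (f v) trivial (congrArg Subtype.val hab)
    obtain ⟨j, hj⟩ := (hg.bijective_of_nat_card_le (by simp [hl])).2 ⟨v, rfl⟩
    exact ⟨j, f v, congrArg Subtype.val hj⟩
  · intro a b hab
    refine Set.disjoint_left.2 ?_
    rintro _ ⟨i, rfl⟩ ⟨k, hk⟩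
    have hki : k = i := by rw [← hf b k, hk, hf a i]
    subst hki
    exact hab (hs.inj k trivial hk.symm)
  · exact fun j => Nat.card_range_of_injective (hleft j).injective
  · intro j
    have h := hs.conn j
    rwa [Set.image_univ] at h
  · intro j
    rw [← Set.range_comp]
    rw [(hleft j).comp_eq_id, Set.range_id]
end

section
/- Let G be a finite connected simple graph with vertex set V, let G' be a finite simple graph with vertex set V', and let λ : V → V' be a covering map. If some fiber of λ contains at least two vertices, then both G and G' contain a cycle (i.e., neither G nor G' is acyclic). -/
section

variable {V V' : Type*} {G : SimpleGraph V} {G' : SimpleGraph V'} {f : V → V'}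

namespace IsGraphCovering

/-- A covering map as a graph homomorphism. -/
def toHom (hcov : IsGraphCovering G G' f) : G →g G' where
  toFun := f
  map_rel' {a _} h := (hcov.2 a).mapsTo h

/-- Local injectivity of `f` means that it creates no backtracking: if consecutive edges of a
walk are distinct, so are consecutive edges of its image. -/
lemma isChain_edges_map (hcov : IsGraphCovering G G' f) {u v : V} (p : G.Walk u v)
    (hp : p.edges.IsChain (· ≠ ·)) : (p.map hcov.toHom).edges.IsChain (· ≠ ·) := by
  induction p with
  | nil => simp
  | @cons a b _ hab q ih =>
    cases q with
    | nil => simp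
    | @cons _ c _ hbc r =>
      simp only [SimpleGraph.Walk.map_cons, SimpleGraph.Walk.edges_cons,
        List.isChain_cons_cons] at hp ih ⊢
      refine ⟨fun h ↦ hp.1 ?_, ih hp.2⟩
      have hac : f a = f c := by
        rw [Sym2.eq_swap] at h
        exact Sym2.congr_right.1 h
      rw [(hcov.2 b).injOn hab.symm hbc hac, Sym2.eq_swap]

/-- A path between two points of one fiber would map to a closed path, which is trivial. -/
lemma injective_of_isAcyclic (hcov : IsGraphCovering G G' f) (hconn : G.Connected)
    (hG' : G'.IsAcyclic) : Function.Injective f := by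
  intro u v huv
  obtain ⟨p, hp⟩ := hconn.exists_isPath u v
  have hchain : p.edges.IsChain (· ≠ ·) := hp.isTrail.edges_nodup.isChain
  have hpath := (hG'.isPath_iff_isChain _).2 (hcov.isChain_edges_map p hchain)
  have hcl : ∀ {x y : V'} (q : G'.Walk x y), q.IsPath → x = y → q.length = 0 := by
    rintro x _ q hq rfl
    exact (SimpleGraph.Walk.isPath_iff_nil.1 hq).length_eq_zero
  have := hcl _ hpath huv
  rw [SimpleGraph.Walk.length_map] at this
  exact SimpleGraph.Walk.eq_of_length_eq_zero this

lemma connected (hcov : IsGraphCovering G G' f) (hconn : G.Connected) : G'.Connected :=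
  hconn.map hcov.toHom hcov.1

open Finset

variable [Fintype V] [DecidableEq V']

/-- Each point over `i` has a neighbor over `j`, and no neighbor is used twice because a point
over `j` has only one neighbor over `i`. -/
lemma card_fiber_le_of_adj (hcov : IsGraphCovering G G' f) {i j : V'} (hij : G'.Adj i j) :
    #{v | f v = i} ≤ #{v | f v = j} := by
  have hex : ∀ v, f v = i → ∃ w, G.Adj v w ∧ f w = j := by
    rintro v rfl
    exact (hcov.2 v).surjOn hij
  choose! g hg using hex
  refine card_le_card_of_injOn g (fun v hv ↦ by simp_all) fun v hv w hw h ↦ ?_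
  simp only [coe_filter, mem_univ, true_and, Set.mem_ofPred_eq] at hv hw
  exact (hcov.2 (g v)).injOn (hg v hv).1.symm (h ▸ (hg w hw).1.symm) (hv.trans hw.symm)

lemma card_fiber_eq (hcov : IsGraphCovering G G' f) (hconn : G.Connected) (i j : V') :
    #{v | f v = i} = #{v | f v = j} := by
  obtain ⟨p⟩ := (hcov.connected hconn).preconnected i j
  induction p with
  | nil => rfl
  | cons h _ ih =>
    exact (le_antisymm (hcov.card_fiber_le_of_adj h) (hcov.card_fiber_le_of_adj h.symm)).trans ih

variable [Fintype V']

/-- Every function on the base sums over the total space to a multiple of its sum, the factor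
being the number of sheets. -/
lemma sum_comp (hcov : IsGraphCovering G G' f) (hconn : G.Connected) (i : V') (d : V' → ℕ) :
    ∑ v, d (f v) = #{v | f v = i} * ∑ j, d j := by
  rw [← sum_fiberwise univ f, mul_sum]
  refine sum_congr rfl fun j _ ↦ ?_
  rw [sum_congr rfl (g := fun _ ↦ d j) (fun v hv ↦ by simp_all), sum_const, smul_eq_mul,
    hcov.card_fiber_eq hconn i j]

/-- If `G` is a tree, a `k`-sheeted covering satisfies
`k * |V'| = |V| = |E| + 1 = k * |E'| + 1`, so `k` divides `1`. -/
lemma card_fiber_eq_one (hcov : IsGraphCovering G G' f) (hG : G.IsTree) (i : V') :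
    #{v | f v = i} = 1 := by
  classical
  have hV := hcov.sum_comp hG.connected i fun _ ↦ 1
  have hE := hcov.sum_comp hG.connected i fun j ↦ G'.degree j
  have hdeg : ∀ v, G'.degree (f v) = G.degree v := fun v ↦ by
    rw [← SimpleGraph.card_neighborSet_eq_degree, ← SimpleGraph.card_neighborSet_eq_degree]
    exact (Fintype.card_congr (hcov.2 v).equiv).symm
  simp only [hdeg, SimpleGraph.sum_degrees_eq_twice_card_edges] at hE
  have hT := hG.card_edgeFinset
  simp only [sum_const, card_univ, smul_eq_mul, mul_one] at hV
  have hk : #{v | f v = i} * #G'.edgeFinset + 1 = #{v | f v = i} * Fintype.card V' := by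
    rw [← hV, ← hT]
    linarith
  exact Nat.dvd_one.1 ((Nat.dvd_add_right (dvd_mul_right _ _)).1 (hk ▸ dvd_mul_right _ _))

end IsGraphCovering

end

/-- If a covering map `f` from a finite connected graph `G` onto a finite graph
`G'` has a fiber with at least two vertices, then neither `G` nor `G'` is acyclic. -/
theorem covering_nontrivial_fiber_implies_cycles {V V' : Type*} [Fintype V] [Fintype V']
    (G : SimpleGraph V) (G' : SimpleGraph V') (f : V → V')
    (hconn : G.Connected) (hcov : IsGraphCovering G G' f)
    (hfiber : ∃ i : V', 2 ≤ Nat.card (f ⁻¹' {i})) :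
    ¬ G.IsAcyclic ∧ ¬ G'.IsAcyclic := by
  classical
  obtain ⟨i, hi⟩ := hfiber
  constructor
  · intro hG
    have h1 := hcov.card_fiber_eq_one ⟨hconn, hG⟩ i
    have h2 : Nat.card (f ⁻¹' {i}) = Finset.card {v | f v = i} := by
      rw [Nat.card_eq_fintype_card, ← Set.toFinset_card]
      congr 1
      ext v
      simp
    omega
  · intro hG'
    have hinj := hcov.injective_of_isAcyclic hconn hG'
    have : Subsingleton (f ⁻¹' {i}) :=
      ⟨fun a b ↦ Subtype.ext (hinj (a.2.trans b.2.symm))⟩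
    have := Finite.card_le_one_iff_subsingleton.2 this
    omega
end

section
/- Let T be a finite connected acyclic simple graph (a tree) with vertex set V, let G' be a finite simple graph with vertex set V', and let λ : V → V' be a covering map. Then λ is a graph isomorphism between T and G': λ is bijective, and for all u, v ∈ V, u and v are adjacent in T if and only if λ(u) and λ(v) are adjacent in G'. -/
open Classical in
/-- Sending each vertex over `a` to its unique neighbour over `b` is injective, because a vertex
over `b` has only one neighbour over `a`. -/
lemma IsGraphCovering.card_fiber_le {V V' : Type*} [Fintype V] {G : SimpleGraph V}
    {G' : SimpleGraph V'} {f : V → V'} (h : IsGraphCovering G G' f) {a b : V'}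
    (hab : G'.Adj a b) :
    (Finset.univ.filter (fun v => f v = a)).card ≤
      (Finset.univ.filter (fun v => f v = b)).card := by
  have hex : ∀ v, f v = a → ∃ w, G.Adj v w ∧ f w = b := by
    intro v hv
    obtain ⟨w, hw, hwb⟩ := (h.2 v).surjOn (show b ∈ G'.neighborSet (f v) by rw [hv]; exact hab)
    exact ⟨w, hw, hwb⟩
  choose! g hg using hex
  refine Finset.card_le_card_of_injOn g ?_ ?_
  · intro v hv
    simp only [Finset.coe_filter, Finset.mem_univ, true_and, Set.mem_ofPred_eq] at hv ⊢
    exact (hg v hv).2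
  · intro v hv w hw hvw
    simp only [Finset.coe_filter, Finset.mem_univ, true_and, Set.mem_ofPred_eq] at hv hw
    refine (h.2 (g v)).injOn (hg v hv).1.symm ?_ (hv.trans hw.symm)
    rw [hvw]
    exact (hg w hw).1.symm

open Classical in
lemma IsGraphCovering.card_fiber_eq_s7 {V V' : Type*} [Fintype V] {G : SimpleGraph V}
    {G' : SimpleGraph V'} {f : V → V'} (h : IsGraphCovering G G' f) (hconn : G.Connected)
    (a b : V') :
    (Finset.univ.filter (fun v => f v = a)).card =
      (Finset.univ.filter (fun v => f v = b)).card := by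
  obtain ⟨u, rfl⟩ := h.1 a
  obtain ⟨v, rfl⟩ := h.1 b
  obtain ⟨p⟩ := hconn.preconnected u v
  induction p with
  | nil => rfl
  | @cons x y z hxy _ ih =>
    have hadj : G'.Adj (f x) (f y) := (h.2 x).mapsTo hxy
    exact (le_antisymm (h.card_fiber_le hadj) (h.card_fiber_le hadj.symm)).trans ih

open Classical in
lemma IsGraphCovering.degree_eq {V V' : Type*} [Fintype V] [Fintype V'] {G : SimpleGraph V}
    {G' : SimpleGraph V'} {f : V → V'} (h : IsGraphCovering G G' f) (v : V) :
    G.degree v = G'.degree (f v) := by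
  rw [← SimpleGraph.card_neighborSet_eq_degree, ← SimpleGraph.card_neighborSet_eq_degree]
  exact Fintype.card_congr ((h.2 v).equiv f)

open Classical in
/-- If all fibres of `f` have size `k`, summing over `V` is `k` times summing over `V'`. -/
lemma sum_comp_of_card_fiber {V V' : Type*} [Fintype V] [Fintype V'] {f : V → V'} {k : ℕ}
    (hk : ∀ a, (Finset.univ.filter (fun v => f v = a)).card = k) (w : V' → ℕ) :
    ∑ v, w (f v) = k * ∑ a, w a := by
  rw [← Finset.sum_fiberwise Finset.univ f, Finset.mul_sum]
  refine Finset.sum_congr rfl fun a _ => ?_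
  rw [Finset.sum_congr rfl (g := fun _ => w a) fun v hv => by rw [(Finset.mem_filter.1 hv).2],
    Finset.sum_const, hk, smul_eq_mul]

/-- A covering map from a finite tree (connected acyclic graph) `T` onto a
finite graph `G'` is a graph isomorphism: it is bijective and preserves and reflects
adjacency. -/
theorem covering_of_tree_is_iso {V V' : Type*} [Fintype V] [Fintype V']
    (T : SimpleGraph V) (G' : SimpleGraph V') (f : V → V')
    (hconn : T.Connected) (hacyc : T.IsAcyclic) (hcov : IsGraphCovering T G' f) :
    Function.Bijective f ∧ ∀ u v : V, T.Adj u v ↔ G'.Adj (f u) (f v) := by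
  classical
  obtain ⟨u₀⟩ := hconn.nonempty
  obtain ⟨k, hk⟩ : ∃ k, ∀ a, (Finset.univ.filter (fun v => f v = a)).card = k :=
    ⟨_, fun a => hcov.card_fiber_eq_s7 hconn a (f u₀)⟩
  have hV : Fintype.card V = k * Fintype.card V' := by
    simpa using sum_comp_of_card_fiber hk (fun _ => 1)
  have hE : T.edgeFinset.card = k * G'.edgeFinset.card := by
    have h := sum_comp_of_card_fiber hk (fun a => G'.degree a)
    simp only [← hcov.degree_eq] at h
    rw [SimpleGraph.sum_degrees_eq_twice_card_edges,
      SimpleGraph.sum_degrees_eq_twice_card_edges] at h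
    linarith
  have htree := (SimpleGraph.IsTree.mk hconn hacyc).card_edgeFinset
  -- `k` divides both `|E|` and `|V| = |E| + 1`, hence divides `1`.
  have hk1 : k = 1 := by
    rw [hV, hE] at htree
    refine Nat.dvd_one.1 ((Nat.dvd_add_right (Dvd.intro _ rfl)).1 (Dvd.intro _ htree.symm))
  have hbij : Function.Bijective f :=
    (Fintype.bijective_iff_surjective_and_card f).2 ⟨hcov.1, by rw [hV, hk1, one_mul]⟩
  refine ⟨hbij, fun u v => ⟨fun huv => (hcov.2 u).mapsTo huv, fun huv => ?_⟩⟩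
  obtain ⟨w, hw, hwv⟩ := (hcov.2 u).surjOn huv
  exact hbij.1 hwv ▸ hw
end

section
/- For all sufficiently large n, at least half of all simple graphs on the labeled vertex set {1,…,n} are connected: there exists N such that for all n ≥ N, 2 · |{G : G is a connected simple graph on vertex set Fin n}| ≥ 2^{n(n-1)/2}. -/
/-!
A graph on a nonempty vertex set or its complement is connected, and complementation is an
involution on graphs. Hence complementation maps the disconnected graphs injectively into the
connected ones, so at least half of all graphs are connected, already for every `n ≥ 1`. The total
number of graphs is `2 ^ (n.choose 2)`: a graph amounts to a set of non-diagonal unordered pairs.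
-/

/-- A simple graph amounts to an arbitrary set of unordered pairs of distinct vertices. -/
def graphEquivSet (V : Type*) : SimpleGraph V ≃ Set {e : Sym2 V // ¬ e.IsDiag} where
  toFun G := {e | e.1 ∈ G.edgeSet}
  invFun S := SimpleGraph.fromEdgeSet (Subtype.val '' S)
  left_inv G := by
    ext a b
    simp only [SimpleGraph.fromEdgeSet_adj, Set.mem_image, Set.mem_ofPred_eq, Subtype.exists,
      exists_and_right, exists_eq_right, SimpleGraph.mem_edgeSet, Sym2.mk_isDiag_iff]
    exact ⟨fun h => h.1.2, fun h => ⟨⟨h.ne, h⟩, h.ne⟩⟩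
  right_inv S := by
    ext ⟨e, he⟩
    induction e with
    | _ a b =>
      rw [Sym2.mk_isDiag_iff] at he
      simp [he]

lemma card_graphs (n : ℕ) : Nat.card (SimpleGraph (Fin n)) = 2 ^ (n * (n - 1) / 2) := by
  classical
  rw [Nat.card_congr (graphEquivSet (Fin n)), Nat.card_eq_fintype_card, Fintype.card_set,
    Sym2.card_subtype_not_diag, Fintype.card_fin, Nat.choose_two_right]

/-- For all sufficiently large `n`, at least half of all simple graphs on the
labeled vertex set `Fin n` are connected. -/
theorem almost_all_graphs_connected :
    ∃ N : ℕ, ∀ n ≥ N,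
      2 * Nat.card {G : SimpleGraph (Fin n) // G.Connected} ≥ 2 ^ (n * (n - 1) / 2) := by
  classical
  refine ⟨1, fun n hn => ?_⟩
  have : Nonempty (Fin n) := ⟨⟨0, hn⟩⟩
  have hle : Nat.card {G : SimpleGraph (Fin n) // ¬ G.Connected} ≤
      Nat.card {G : SimpleGraph (Fin n) // G.Connected} :=
    Nat.card_le_card_of_injective
      (fun G => ⟨G.1ᶜ, G.1.connected_or_connected_compl.resolve_left G.2⟩)
      fun G H h => Subtype.ext (compl_injective (congrArg Subtype.val h))
  rw [← card_graphs,
    ← Nat.card_congr (Equiv.sumCompl fun G : SimpleGraph (Fin n) => G.Connected), Nat.card_sum]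
  omega
end

section
/- Let n ≥ 1, let T₁ and T₂ be finite trees with exactly n vertices each, let r₁ be a vertex of T₁ and r₂ a vertex of T₂, and let m ≥ 2 be an even natural number. Let T be the simple graph on the disjoint union V(T₁) ⊔ {p₁,…,p_m} ⊔ V(T₂) whose edges are the edges of T₁, the edges of T₂, the path edges {p_k, p_{k+1}} for 1 ≤ k < m, and the edges {r₁, p₁} and {p_m, r₂}. Then T is a tree, and T admits a fixed-point-free automorphism (an automorphism φ with φ(v) ≠ v for every vertex v) if and only if there exists a graph isomorphism ψ from T₁ to T₂ with ψ(r₁) = r₂. -/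
/-!
Write `m = 2t` and let `x = p_t`, `y = p_{t+1}` be the ends of the middle edge of the path.

The glued graph is connected, and each of its edges is an edge of `T₁`, an edge of `T₂` or one of
the `m + 1` steps of the spine `r₁, p₁, …, p_m, r₂`. So it has at most `|V| - 1` edges and is a
tree (`glueTrees_isTree`).

A root-preserving isomorphism `ψ` gives the automorphism that acts by `ψ` and `ψ⁻¹` on the two
trees and reverses the path (`glueFlip`); it has no fixed point because `m` is even.

Conversely, let `φ` be a fixed-point-free automorphism. The edge `xy` cuts the tree into two
halves of equal size, so `x` and `y` are the strict minimizers, each within its own half, of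
`v ↦ ∑ u, dist v u` (`sum_dist_lt_of_half`). This function is invariant under `φ`, and `φ` fixes
neither `x` nor `y`, hence `φ` exchanges them (`fpf_maps_minimizer`). As `p₁, …, p_m` have no
neighbours off the spine, `φ` then reverses the spine (`iso_reverses_glueSpine`); in particular
`r₁ ↦ r₂` and `p₁ ↦ p_m`, and connectedness of `T₁` gives `φ(T₁) ⊆ T₂`
(`iso_maps_left_to_right`). The restriction of `φ` to `T₁` is an isomorphism onto `T₂` since both
have `n` vertices.
-/


/-- The graph obtained from `T₁` and `T₂` by joining the vertex `r₁` of `T₁` to the vertex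
`r₂` of `T₂` via a path `p₁, …, p_m` of `m` fresh vertices (indexed by `Fin m`): the edges
are those of `T₁`, those of `T₂`, the path edges `{p_k, p_{k+1}}`, and the edges `{r₁, p₁}`
and `{p_m, r₂}`. -/
def glueTrees {V₁ V₂ : Type*} (T₁ : SimpleGraph V₁) (T₂ : SimpleGraph V₂)
    (r₁ : V₁) (r₂ : V₂) (m : ℕ) : SimpleGraph (V₁ ⊕ (Fin m ⊕ V₂)) :=
  SimpleGraph.fromRel (fun x y =>
    match x, y with
    | .inl u, .inl v => T₁.Adj u v
    | .inr (.inr u), .inr (.inr v) => T₂.Adj u v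
    | .inr (.inl k), .inr (.inl k') => (k' : ℕ) = (k : ℕ) + 1
    | .inl u, .inr (.inl k) => u = r₁ ∧ (k : ℕ) = 0
    | .inr (.inl k), .inr (.inr v) => (k : ℕ) = m - 1 ∧ v = r₂
    | _, _ => False)

open SimpleGraph

/-! ### Adjacency in the glued graph -/

section Adj
variable {V₁ V₂ : Type*} {T₁ : SimpleGraph V₁} {T₂ : SimpleGraph V₂} {r₁ : V₁} {r₂ : V₂} {m : ℕ}

@[simp] lemma glueTrees_adj_inl_inl (u v : V₁) :
    (glueTrees T₁ T₂ r₁ r₂ m).Adj (.inl u) (.inl v) ↔ T₁.Adj u v := by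
  simp only [glueTrees, fromRel_adj, T₁.adj_comm v u, or_self, ne_eq, Sum.inl.injEq]
  exact ⟨fun h => h.2, fun h => ⟨h.ne, h⟩⟩

@[simp] lemma glueTrees_adj_inr_inr (u v : V₂) :
    (glueTrees T₁ T₂ r₁ r₂ m).Adj (.inr (.inr u)) (.inr (.inr v)) ↔ T₂.Adj u v := by
  simp only [glueTrees, fromRel_adj, T₂.adj_comm v u, or_self, ne_eq, Sum.inr.injEq]
  exact ⟨fun h => h.2, fun h => ⟨h.ne, h⟩⟩

@[simp] lemma glueTrees_adj_mid_mid (k l : Fin m) :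
    (glueTrees T₁ T₂ r₁ r₂ m).Adj (.inr (.inl k)) (.inr (.inl l)) ↔
      (l : ℕ) = k + 1 ∨ (k : ℕ) = l + 1 := by
  simp only [glueTrees, fromRel_adj, ne_eq, Sum.inr.injEq, Sum.inl.injEq, Fin.ext_iff]
  omega

@[simp] lemma glueTrees_adj_inl_mid (u : V₁) (k : Fin m) :
    (glueTrees T₁ T₂ r₁ r₂ m).Adj (.inl u) (.inr (.inl k)) ↔ u = r₁ ∧ (k : ℕ) = 0 := by
  simp [glueTrees]

@[simp] lemma glueTrees_adj_mid_inl (u : V₁) (k : Fin m) :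
    (glueTrees T₁ T₂ r₁ r₂ m).Adj (.inr (.inl k)) (.inl u) ↔ u = r₁ ∧ (k : ℕ) = 0 := by
  simp [glueTrees]

@[simp] lemma glueTrees_adj_mid_inr (k : Fin m) (v : V₂) :
    (glueTrees T₁ T₂ r₁ r₂ m).Adj (.inr (.inl k)) (.inr (.inr v)) ↔
      (k : ℕ) = m - 1 ∧ v = r₂ := by
  simp [glueTrees]

@[simp] lemma glueTrees_adj_inr_mid (k : Fin m) (v : V₂) :
    (glueTrees T₁ T₂ r₁ r₂ m).Adj (.inr (.inr v)) (.inr (.inl k)) ↔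
      (k : ℕ) = m - 1 ∧ v = r₂ := by
  simp [glueTrees]

@[simp] lemma glueTrees_not_adj_inl_inr (u : V₁) (v : V₂) :
    ¬ (glueTrees T₁ T₂ r₁ r₂ m).Adj (.inl u) (.inr (.inr v)) := by
  simp [glueTrees]

@[simp] lemma glueTrees_not_adj_inr_inl (u : V₁) (v : V₂) :
    ¬ (glueTrees T₁ T₂ r₁ r₂ m).Adj (.inr (.inr v)) (.inl u) := by
  simp [glueTrees]

end Adj

/-! ### The spine, and the glued graph is a tree -/

/-- The sequence `r₁, p₁, …, p_m, r₂` of vertices of the glued tree, indexed by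
`0, 1, …, m + 1`; it is constantly `r₂` from index `m + 1` on. -/
def glueSpine {V₁ V₂ : Type*} (r₁ : V₁) (r₂ : V₂) (m k : ℕ) : V₁ ⊕ (Fin m ⊕ V₂) :=
  if k = 0 then .inl r₁
  else if h : k - 1 < m then .inr (.inl ⟨k - 1, h⟩)
  else .inr (.inr r₂)

section Spine
variable {V₁ V₂ : Type*} {T₁ : SimpleGraph V₁} {T₂ : SimpleGraph V₂} {r₁ : V₁} {r₂ : V₂} {m : ℕ}

lemma glueSpine_zero : glueSpine r₁ r₂ m 0 = .inl r₁ := by simp [glueSpine]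

lemma glueSpine_last : glueSpine r₁ r₂ m (m + 1) = .inr (.inr r₂) := by simp [glueSpine]

lemma glueSpine_succ {k : ℕ} (h : k < m) :
    glueSpine r₁ r₂ m (k + 1) = .inr (.inl ⟨k, h⟩) := by simp [glueSpine, h]

lemma mid_eq_glueSpine (k : Fin m) :
    (.inr (.inl k) : V₁ ⊕ (Fin m ⊕ V₂)) = glueSpine r₁ r₂ m (k + 1) := by
  simp [glueSpine]

lemma glueSpine_inj {k l : ℕ} (hk : k ≤ m + 1) (hl : l ≤ m + 1)
    (h : glueSpine r₁ r₂ m k = glueSpine r₁ r₂ m l) : k = l := by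
  unfold glueSpine at h
  split_ifs at h <;> simp at h <;> omega

lemma glueSpine_adj (hm : 1 ≤ m) {k : ℕ} (hk : k ≤ m) :
    (glueTrees T₁ T₂ r₁ r₂ m).Adj (glueSpine r₁ r₂ m k) (glueSpine r₁ r₂ m (k + 1)) := by
  rcases k with _ | k
  · rw [glueSpine_zero, glueSpine_succ (by omega)]
    simp
  · rw [glueSpine_succ (by omega)]
    rcases Nat.lt_or_eq_of_le hk with h | rfl
    · rw [glueSpine_succ h]
      simp
    · rw [glueSpine_last]
      simp

lemma eq_glueSpine_of_adj {k : ℕ} (hk : k + 1 ≤ m) {w : V₁ ⊕ (Fin m ⊕ V₂)}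
    (h : (glueTrees T₁ T₂ r₁ r₂ m).Adj (glueSpine r₁ r₂ m (k + 1)) w) :
    w = glueSpine r₁ r₂ m k ∨ w = glueSpine r₁ r₂ m (k + 2) := by
  rw [glueSpine_succ hk] at h
  rcases w with u | l | u
  · simp only [glueTrees_adj_mid_inl] at h
    left; rw [h.1, h.2, glueSpine_zero]
  · simp only [glueTrees_adj_mid_mid] at h
    rw [mid_eq_glueSpine (r₁ := r₁) (r₂ := r₂)]
    rcases h with h | h
    · right; rw [h]
    · left; rw [h]
  · simp only [glueTrees_adj_mid_inr] at h
    right; rw [h.2, show k + 2 = m + 1 by omega, glueSpine_last]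

lemma glueSpine_reachable (hm : 1 ≤ m) {k : ℕ} (hk : k ≤ m + 1) :
    (glueTrees T₁ T₂ r₁ r₂ m).Reachable (.inl r₁) (glueSpine r₁ r₂ m k) := by
  induction k with
  | zero => rw [glueSpine_zero]
  | succ k ih => exact (ih (by omega)).trans (glueSpine_adj hm (by omega)).reachable

theorem glueTrees_connected (hm : 1 ≤ m) (hc₁ : T₁.Connected) (hc₂ : T₂.Connected) :
    (glueTrees T₁ T₂ r₁ r₂ m).Connected := by
  rw [connected_iff_exists_forall_reachable]
  refine ⟨.inl r₁, ?_⟩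
  rintro (u | k | u)
  · let f : T₁ →g glueTrees T₁ T₂ r₁ r₂ m := ⟨Sum.inl, by simp⟩
    exact (hc₁ r₁ u).map f
  · rw [mid_eq_glueSpine (r₁ := r₁) (r₂ := r₂)]
    exact glueSpine_reachable hm (by omega)
  · let f : T₂ →g glueTrees T₁ T₂ r₁ r₂ m := ⟨fun v => .inr (.inr v), by simp⟩
    have h := glueSpine_reachable (T₁ := T₁) (T₂ := T₂) (r₁ := r₁) (r₂ := r₂) hm le_rfl
    rw [glueSpine_last] at h
    exact h.trans ((hc₂ r₂ u).map f)

/-- Every edge comes from an edge of `T₁`, an edge of `T₂`, or one of the `m + 1` steps of the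
spine, so there are at most `(|V₁| - 1) + (|V₂| - 1) + (m + 1) = |V| - 1` edges, which makes a
connected graph a tree. -/
theorem glueTrees_isTree [Finite V₁] [Finite V₂] (hm : 1 ≤ m)
    (h₁ : T₁.IsTree) (h₂ : T₂.IsTree) : (glueTrees T₁ T₂ r₁ r₂ m).IsTree := by
  set G := glueTrees T₁ T₂ r₁ r₂ m with hG
  have hc : G.Connected := glueTrees_connected hm h₁.connected h₂.connected
  rw [isTree_iff_connected_and_card]
  refine ⟨hc, le_antisymm ?_ hc.card_vert_le_card_edgeSet_add_one⟩
  have e₁ := (isTree_iff_connected_and_card.1 h₁).2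
  have e₂ := (isTree_iff_connected_and_card.1 h₂).2
  let g : T₁.edgeSet ⊕ (Fin (m + 1) ⊕ T₂.edgeSet) → Sym2 (V₁ ⊕ (Fin m ⊕ V₂)) := fun e =>
    match e with
    | .inl e => e.1.map Sum.inl
    | .inr (.inl k) => s(glueSpine r₁ r₂ m k, glueSpine r₁ r₂ m (k + 1))
    | .inr (.inr e) => e.1.map (fun v => .inr (.inr v))
  have spine (k : ℕ) (hk : k ≤ m) :
      s(glueSpine r₁ r₂ m k, glueSpine r₁ r₂ m (k + 1)) ∈ Set.range g :=
    ⟨.inr (.inl ⟨k, by omega⟩), rfl⟩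
  have midmem (k : Fin m) (w) (h : G.Adj (.inr (.inl k)) w) :
      s(.inr (.inl k), w) ∈ Set.range g := by
    rw [mid_eq_glueSpine (r₁ := r₁) (r₂ := r₂)] at h ⊢
    rcases eq_glueSpine_of_adj (by omega) h with rfl | rfl
    · rw [Sym2.eq_swap]; exact spine _ (by omega)
    · exact spine _ (by omega)
  have hsub : G.edgeSet ⊆ Set.range g := by
    intro e
    induction e with | _ a b
    intro h
    rw [mem_edgeSet] at h
    rcases a with a | k | a
    · rcases b with b | l | b
      · exact ⟨.inl ⟨s(a, b), by simpa [hG] using h⟩, rfl⟩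
      · rw [Sym2.eq_swap]; exact midmem _ _ h.symm
      · simp [hG] at h
    · exact midmem _ _ h
    · rcases b with b | l | b
      · simp [hG] at h
      · rw [Sym2.eq_swap]; exact midmem _ _ h.symm
      · exact ⟨.inr (.inr ⟨s(a, b), by simpa [hG] using h⟩), rfl⟩
  have hle : Nat.card G.edgeSet ≤
      Nat.card (T₁.edgeSet ⊕ (Fin (m + 1) ⊕ T₂.edgeSet)) :=
    (Nat.card_mono (Set.finite_range g) hsub).trans (Finite.card_range_le g)
  simp only [Nat.card_sum, Nat.card_fin] at hle ⊢
  omega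

end Spine

/-! ### Vertices of minimal distance sum -/

section Centroid
variable {V : Type*} [Fintype V] {G : SimpleGraph V}

/-- Let `S` be one of two halves of a connected graph, exchanged by a permutation `σ`, such that
every edge leaving `S` starts at `x`. Then `x` is the only vertex of `S` that minimizes the sum
of the distances to all vertices. Indeed, for `u ∈ S` the triangle inequality gives
`d(v, u) - d(x, u) ≥ -d(v, x)`, strictly for `u = x`, and for `u ∉ S` every walk from `v` to `u`
visits `x`, so `d(v, u) - d(x, u) ≥ d(v, x)`; the two bounds cancel since both halves have the
same size. -/
lemma sum_dist_lt_of_half (hc : G.Connected) (S : Set V) (σ : Equiv.Perm V)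
    (hσ : ∀ u, σ u ∈ S ↔ u ∉ S) {x : V} (hx : x ∈ S)
    (hcross : ∀ a b, a ∈ S → b ∉ S → G.Adj a b → a = x) {v : V} (hv : v ∈ S) (hvx : v ≠ x) :
    ∑ u, G.dist x u < ∑ u, G.dist v u := by
  classical
  have hout (u : V) (hu : u ∉ S) : G.dist v x + G.dist x u ≤ G.dist v u := by
    obtain ⟨p, hp⟩ := hc.exists_walk_length_eq_dist v u
    obtain ⟨d, hd, h1, h2⟩ := p.exists_boundary_dart S hv hu
    have hxp : x ∈ p.support := by
      rw [← hcross _ _ h1 h2 d.adj]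
      exact p.dart_fst_mem_support_of_mem_darts hd
    have := congrArg Walk.length (p.take_spec hxp)
    rw [Walk.length_append] at this
    have := dist_le (p.takeUntil x hxp)
    have := dist_le (p.dropUntil x hxp)
    omega
  have hin (u : V) : G.dist x u ≤ G.dist v x + G.dist v u := by
    rw [G.dist_comm (u := v) (v := x)]
    exact hc.dist_triangle
  have hpos : 0 < G.dist v x := hc.pos_dist_of_ne hvx
  -- Summing over the pairs `{u, σ u}` counts every vertex twice.
  have key : ∑ u, (G.dist x u + G.dist x (σ u)) < ∑ u, (G.dist v u + G.dist v (σ u)) := by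
    refine Finset.sum_lt_sum (fun u _ => ?_) ⟨x, Finset.mem_univ _, ?_⟩
    · by_cases hu : u ∈ S
      · have := hout (σ u) (by rw [hσ]; simpa using hu)
        have := hin u
        omega
      · have := hin (σ u)
        have := hout u hu
        omega
    · have := hout (σ x) (by rw [hσ]; simpa using hx)
      rw [dist_self]
      omega
  simp only [Finset.sum_add_distrib, Equiv.sum_comp σ (fun u => G.dist x u),
    Equiv.sum_comp σ (fun u => G.dist v u)] at key
  omega

omit [Fintype V] in
lemma dist_hom_le (hc : G.Connected) (φ : G ≃g G) (u v : V) :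
    G.dist (φ u) (φ v) ≤ G.dist u v := by
  obtain ⟨p, hp⟩ := hc.exists_walk_length_eq_dist u v
  have := dist_le (p.map φ.toHom)
  rw [Walk.length_map, hp] at this
  exact this

lemma sum_dist_iso (hc : G.Connected) (φ : G ≃g G) (v : V) :
    ∑ u, G.dist (φ v) u = ∑ u, G.dist v u := by
  rw [← Equiv.sum_comp φ.toEquiv]
  refine Finset.sum_congr rfl fun u _ => le_antisymm (dist_hom_le hc φ v u) ?_
  simpa using dist_hom_le hc φ.symm (φ v) (φ u)

/-- If `x` and `y` are the only minimizers of the distance sum inside `S` and outside `S`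
respectively, then a fixed-point-free automorphism must send `x` to `y`. -/
lemma fpf_maps_minimizer (hc : G.Connected) (φ : G ≃g G) (hφ : ∀ v, φ v ≠ v) (S : Set V) {x y : V}
    (hxmin : ∀ v ∈ S, v ≠ x → ∑ u, G.dist x u < ∑ u, G.dist v u)
    (hymin : ∀ v ∉ S, v ≠ y → ∑ u, G.dist y u < ∑ u, G.dist v u) : φ x = y := by
  by_contra hne
  have hDx := sum_dist_iso hc φ x
  have hDy := sum_dist_iso hc φ y
  have hxS : φ x ∉ S := fun h => by
    have := hxmin _ h (hφ x)
    omega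
  have hlt := hymin _ hxS hne
  by_cases hyS : φ y ∈ S
  · by_cases hyx : φ y = x
    · rw [hyx] at hDy
      omega
    · have := hxmin _ hyS hyx
      omega
  · have := hymin _ hyS (hφ y)
    omega

end Centroid

/-! ### Automorphisms and the middle edge -/

section Fpf
variable {V₁ V₂ : Type*} {T₁ : SimpleGraph V₁} {T₂ : SimpleGraph V₂} {r₁ : V₁} {r₂ : V₂} {m : ℕ}

/-- The vertices of `T₁` together with `p₁, …, p_t` (the elements `0, …, t - 1` of `Fin m`). For
`m = 2t` this is the `T₁` side of the middle edge of the path. -/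
def glueLeft (V₁ V₂ : Type*) (m t : ℕ) : Set (V₁ ⊕ (Fin m ⊕ V₂)) :=
  {v | match v with
    | .inl _ => True
    | .inr (.inl k) => (k : ℕ) < t
    | .inr (.inr _) => False}

/-- The permutation of the vertex set that exchanges `V₁` and `V₂` along a bijection `e` and
reverses the path. -/
def glueFlip (e : V₁ ≃ V₂) (m : ℕ) : Equiv.Perm (V₁ ⊕ (Fin m ⊕ V₂)) :=
  Function.Involutive.toPerm
    (fun v => match v with
      | .inl u => .inr (.inr (e u))
      | .inr (.inl k) => .inr (.inl k.rev)
      | .inr (.inr u) => .inl (e.symm u))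
    (by rintro (u | k | u) <;> simp)

@[simp] lemma glueFlip_inl (e : V₁ ≃ V₂) (u : V₁) :
    glueFlip e m (.inl u) = .inr (.inr (e u)) := rfl

@[simp] lemma glueFlip_mid (e : V₁ ≃ V₂) (k : Fin m) :
    glueFlip e m (.inr (.inl k)) = .inr (.inl k.rev) := rfl

@[simp] lemma glueFlip_inr (e : V₁ ≃ V₂) (u : V₂) :
    glueFlip e m (.inr (.inr u)) = .inl (e.symm u) := rfl

lemma glueFlip_mem_glueLeft {t : ℕ} (hmt : m = t + t) (e : V₁ ≃ V₂) (v : V₁ ⊕ (Fin m ⊕ V₂)) :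
    glueFlip e m v ∈ glueLeft V₁ V₂ m t ↔ v ∉ glueLeft V₁ V₂ m t := by
  rcases v with u | k | u <;> simp [glueLeft]
  omega

lemma glueLeft_cross {t : ℕ} (ht : 1 ≤ t) (hmt : m = t + t) {a b : V₁ ⊕ (Fin m ⊕ V₂)}
    (ha : a ∈ glueLeft V₁ V₂ m t) (hb : b ∉ glueLeft V₁ V₂ m t)
    (h : (glueTrees T₁ T₂ r₁ r₂ m).Adj a b) :
    a = glueSpine r₁ r₂ m t ∧ b = glueSpine r₁ r₂ m (t + 1) := by
  rcases a with a | k | a <;> rcases b with b | l | b <;> simp [glueLeft] at ha hb h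
  · omega
  · rw [mid_eq_glueSpine (r₁ := r₁) (r₂ := r₂), mid_eq_glueSpine (r₁ := r₁) (r₂ := r₂),
      show (k : ℕ) + 1 = t by omega, show (l : ℕ) = t by omega]
    exact ⟨rfl, rfl⟩
  · omega

/-- An automorphism exchanging the ends of the middle edge reverses the spine, since inner spine
vertices have no neighbours off the spine. The index `j` counts the steps from the middle towards
`r₁`; the second conjunct carries the previous step, which excludes turning back. -/
lemma iso_reverses_glueSpine {t : ℕ} (hmt : m = t + t) (hm : 1 ≤ m)
    (φ : glueTrees T₁ T₂ r₁ r₂ m ≃g glueTrees T₁ T₂ r₁ r₂ m)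
    (hx : φ (glueSpine r₁ r₂ m t) = glueSpine r₁ r₂ m (t + 1))
    (hy : φ (glueSpine r₁ r₂ m (t + 1)) = glueSpine r₁ r₂ m t) (j : ℕ) (hj : j ≤ t) :
    φ (glueSpine r₁ r₂ m (t - j)) = glueSpine r₁ r₂ m (t + j + 1) ∧
      φ (glueSpine r₁ r₂ m (t - j + 1)) = glueSpine r₁ r₂ m (t + j) := by
  induction j with
  | zero => exact ⟨hx, hy⟩
  | succ j ih =>
    obtain ⟨i, hi⟩ : ∃ i, t - j = i + 1 := ⟨t - j - 1, by omega⟩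
    have hi' : t - (j + 1) = i := by omega
    rw [hi] at ih
    rw [hi']
    obtain ⟨ih1, ih2⟩ := ih (by omega)
    refine ⟨?_, ih1⟩
    have hadj := φ.map_adj_iff.2
      (glueSpine_adj (T₁ := T₁) (T₂ := T₂) (r₁ := r₁) (r₂ := r₂) hm (show i ≤ m by omega)).symm
    rw [ih1] at hadj
    rcases eq_glueSpine_of_adj (by omega) hadj with h | h
    · rw [← ih2] at h
      have := glueSpine_inj (by omega) (by omega) (φ.injective h)
      omega
    · exact h

/-- An automorphism with `r₁ ↦ r₂` and `p₁ ↦ p_m` maps `T₁` into `T₂`: moving inside `T₁` the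
image can leave `T₂` only through `p_m`, which is the image of `p₁`. -/
lemma iso_maps_left_to_right (hm : 1 ≤ m) (hc₁ : T₁.Connected)
    (φ : glueTrees T₁ T₂ r₁ r₂ m ≃g glueTrees T₁ T₂ r₁ r₂ m)
    (h0 : φ (.inl r₁) = .inr (.inr r₂))
    (h1 : φ (glueSpine r₁ r₂ m 1) = glueSpine r₁ r₂ m m) (u : V₁) :
    ∃ w, φ (.inl u) = .inr (.inr w) := by
  have step (a b : V₁) (hab : T₁.Adj a b) (ha : ∃ w, φ (.inl a) = .inr (.inr w)) :
      ∃ w, φ (.inl b) = .inr (.inr w) := by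
    obtain ⟨w, hw⟩ := ha
    have hadj := φ.map_adj_iff.2 ((glueTrees_adj_inl_inl (T₂ := T₂) (r₁ := r₁) (r₂ := r₂)
      (m := m) a b).2 hab)
    rw [hw] at hadj
    rcases hb : φ (.inl b) with c | k | c <;> rw [hb] at hadj
    · simp at hadj
    · exfalso
      simp only [glueTrees_adj_inr_mid] at hadj
      rw [mid_eq_glueSpine (r₁ := r₁) (r₂ := r₂), show (k : ℕ) + 1 = m by omega, ← h1] at hb
      have := φ.injective hb
      rw [glueSpine_succ (k := 0) hm] at this
      simp at this
    · exact ⟨c, rfl⟩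
  obtain ⟨p⟩ := hc₁ r₁ u
  have walk (a b : V₁) (p : T₁.Walk a b) (ha : ∃ w, φ (.inl a) = .inr (.inr w)) :
      ∃ w, φ (.inl b) = .inr (.inr w) := by
    induction p with
    | nil => exact ha
    | cons h _ ih => exact ih (step _ _ h ha)
  exact walk _ _ p ⟨_, h0⟩

end Fpf

/-- If `T₁` and `T₂` are trees with `n ≥ 1` vertices each and they are joined
by a path of `m` fresh vertices, with `m ≥ 2` even, then the resulting graph `T` is a tree,
and `T` admits a fixed-point-free automorphism iff there exists a graph isomorphism from
`T₁` to `T₂` sending `r₁` to `r₂`. -/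
theorem glued_trees_fpf_automorphism_iff {V₁ V₂ : Type*} [Fintype V₁] [Fintype V₂]
    (n : ℕ) (hn : 1 ≤ n)
    (T₁ : SimpleGraph V₁) (T₂ : SimpleGraph V₂)
    (hc₁ : T₁.Connected) (ha₁ : T₁.IsAcyclic)
    (hc₂ : T₂.Connected) (ha₂ : T₂.IsAcyclic)
    (hcard₁ : Fintype.card V₁ = n) (hcard₂ : Fintype.card V₂ = n)
    (r₁ : V₁) (r₂ : V₂) (m : ℕ) (hm : 2 ≤ m) (hmeven : Even m) :
    ((glueTrees T₁ T₂ r₁ r₂ m).Connected ∧ (glueTrees T₁ T₂ r₁ r₂ m).IsAcyclic) ∧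
      ((∃ φ : glueTrees T₁ T₂ r₁ r₂ m ≃g glueTrees T₁ T₂ r₁ r₂ m, ∀ v, φ v ≠ v) ↔
        (∃ ψ : T₁ ≃g T₂, ψ r₁ = r₂)) := by
  have hT := glueTrees_isTree (r₁ := r₁) (r₂ := r₂) (m := m) (by omega) ⟨hc₁, ha₁⟩ ⟨hc₂, ha₂⟩
  refine ⟨⟨hT.connected, hT.isAcyclic⟩, ?_, ?_⟩
  · rintro ⟨φ, hφ⟩
    obtain ⟨t, hmt⟩ := hmeven
    have e : V₁ ≃ V₂ := Fintype.equivOfCardEq (hcard₁.trans hcard₂.symm)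
    set S := glueLeft V₁ V₂ m t with hS
    have hxS : glueSpine r₁ r₂ m t ∈ S := by
      obtain ⟨s, rfl⟩ : ∃ s, t = s + 1 := ⟨t - 1, by omega⟩
      rw [glueSpine_succ (by omega)]
      simp [hS, glueLeft]
    have hyS : glueSpine r₁ r₂ m (t + 1) ∉ S := by
      rw [glueSpine_succ (by omega)]
      simp [hS, glueLeft]
    have hxmin := fun v (hv : v ∈ S) => sum_dist_lt_of_half hT.connected S (glueFlip e m)
      (glueFlip_mem_glueLeft hmt e) hxS
      (fun a b ha hb h => (glueLeft_cross (by omega) hmt ha hb h).1) hv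
    have hymin := fun v (hv : v ∉ S) => sum_dist_lt_of_half hT.connected Sᶜ (glueFlip e m)
      (fun u => (glueFlip_mem_glueLeft hmt e u).not) hyS
      (fun a b ha hb h => (glueLeft_cross (by omega) hmt (not_not.1 hb) ha h.symm).2) hv
    have hx := fpf_maps_minimizer hT.connected φ hφ S hxmin hymin
    have hy := fpf_maps_minimizer hT.connected φ hφ Sᶜ hymin (fun v hv => hxmin v (not_not.1 hv))
    -- With `j = t` the reversal reaches the roots.
    have hend := iso_reverses_glueSpine hmt (by omega) φ hx hy t le_rfl
    rw [Nat.sub_self, ← hmt, glueSpine_zero, glueSpine_last] at hend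
    choose f hf using iso_maps_left_to_right (by omega) hc₁ φ hend.1 hend.2
    have hinj : Function.Injective f := fun a b hab => by
      have : φ (.inl a) = φ (.inl b) := by rw [hf, hf, hab]
      simpa using φ.injective this
    have hbij : Function.Bijective f :=
      (Fintype.bijective_iff_injective_and_card f).2 ⟨hinj, hcard₁.trans hcard₂.symm⟩
    refine ⟨⟨Equiv.ofBijective f hbij, ?_⟩, ?_⟩
    · intro a b
      have := φ.map_adj_iff (v := .inl a) (w := .inl b)
      rw [hf, hf] at this
      simpa using this
    · have := (hf r₁).symm.trans hend.1
      simpa using this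
  · rintro ⟨ψ, hψ⟩
    have hψ' : ∀ u, ψ u = r₂ ↔ u = r₁ := fun u => by rw [← hψ, ψ.apply_eq_iff_eq]
    have hψs : ∀ u, ψ.toEquiv.symm u = r₁ ↔ u = r₂ := fun u => by
      rw [← hψ]
      exact ψ.toEquiv.symm_apply_eq
    have hadj : ∀ u v, T₁.Adj (ψ.toEquiv.symm u) (ψ.toEquiv.symm v) ↔ T₂.Adj u v :=
      fun u v => ψ.symm.map_adj_iff
    refine ⟨⟨glueFlip ψ.toEquiv m, ?_⟩, ?_⟩
    · rintro (u | k | u) (v | l | v) <;>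
        simp [hψ', hψs, hadj, ψ.map_adj_iff, and_comm] <;>
        omega
    · rintro (u | k | u)
      · simp
      · obtain ⟨t, ht⟩ := hmeven
        simp [Fin.ext_iff]
        omega
      · simp
end
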